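/- arXiv:2505.05662 — 2 statements merged into one kernel-verified Lean document; each statement's English description precedes it below -/
import Mathlib

section
/- Let G = Θ(2,2,2k) with k ≥ 2, whose end vertices are u and v, and let L be a 3-assignment for G such that L(u) ≠ L(v). Then P(G,L) ≥ P(G,3). -/
/-!
Fix the colors `a` and `b` of the end vertices `u` and `v`. The middle vertices `x`, `y` of the two
short paths and the interior of the long path are then colored independently, so
`P(G,L) = ∑ a ∈ L(u), ∑ b ∈ L(v), s_x(a,b) * s_y(a,b) * N(a,b)` with `s_x(a,b) = |L(x) \ {a,b}|`
and `N(a,b)` the number of colorings of the long path with these ends (`numListColorings_theta`).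
For constant lists this gives `P(G,3) = 6 * 4 ^ k + 6`.

Put `q = (4 ^ k - 1) / 3`. Three facts about a `3`-assignment carry the lower bound.

* `N(a,b) ≥ q` for all `a`, `b` (`pathCount_odd_ge`): passing two vertices further along the path
  visits every color of the next list at least once, and some color a second time.
* `∑ N(a,b) ≥ 3 * 4 ^ k` (`sum_pathCount_ge`): every vertex has two choices after its predecessor.
* `∑ s_x s_y ≥ 27 - 3 d ≥ 21`, where `d = |L(u) ∩ L(v)| ≤ 2` (`sum_weight_ge`). Indeed
  `s_x s_y ≥ s_x + s_y - 1 + [a = b]`, and `∑ s_x ≥ 18 - 2 d`.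

Since `s_x s_y ≥ 1`, these combine to
`P(G,L) ≥ (21 - 9) * q + 3 * 4 ^ k = 7 * 4 ^ k - 4 ≥ 6 * 4 ^ k + 6`, as `4 ^ k ≥ 10`.
-/

/-- A proper `L`-coloring of `G`: each vertex gets a color from its list,
and adjacent vertices get different colors. -/
def IsProperListColoring {V : Type*} (G : SimpleGraph V) (L : V → Finset ℕ) (f : V → ℕ) : Prop :=
  (∀ v, f v ∈ L v) ∧ ∀ ⦃u w : V⦄, G.Adj u w → f u ≠ f w

/-- `P(G,L)`: the number of proper `L`-colorings of `G`. -/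
noncomputable def numListColorings {V : Type*} (G : SimpleGraph V) (L : V → Finset ℕ) : ℕ :=
  Nat.card {f : V → ℕ // IsProperListColoring G L f}

/-- The chromatic polynomial `P(G,m)`: the number of proper colorings using colors from `{1,…,m}`. -/
noncomputable def chromPoly {V : Type*} (G : SimpleGraph V) (m : ℕ) : ℕ :=
  numListColorings G (fun _ => Finset.Icc 1 m)

/-- The list color function `P_ℓ(G,m)`: the minimum number of proper `L`-colorings
over all `m`-assignments `L`. -/
noncomputable def listColorFn {V : Type*} (G : SimpleGraph V) (m : ℕ) : ℕ :=
  sInf {n | ∃ L : V → Finset ℕ, (∀ v, (L v).card = m) ∧ numListColorings G L = n}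

/-- The generalized theta graph `Θ(2,2,2k)` on vertex set `Fin (2k+3)`:
`u = 0`, `v = 1`, the internal vertices of the two paths of length 2 are `2` and `3`,
and the internal vertices `z_1, …, z_{2k-1}` of the path of length `2k` are `4, …, 2k+2`. -/
def thetaGraph (k : ℕ) : SimpleGraph (Fin (2*k+3)) :=
  SimpleGraph.fromRel (fun a b =>
    (a.val = 0 ∧ b.val = 2) ∨ (a.val = 2 ∧ b.val = 1) ∨
    (a.val = 0 ∧ b.val = 3) ∨ (a.val = 3 ∧ b.val = 1) ∨
    (a.val = 0 ∧ b.val = 4) ∨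
    (4 ≤ a.val ∧ b.val = a.val + 1 ∧ a.val + 1 ≤ 2*k+2) ∨
    (a.val = 2*k+2 ∧ b.val = 1))

/-! ### Counting colorings of a path -/

/-- The number of colorings of the `n` interior vertices of a path whose end vertices have the
colors `a` and `b`, where the `i`-th interior vertex counted from the end colored `a` has the
list `M i`. -/
def pathCount : ℕ → (ℕ → Finset ℕ) → ℕ → ℕ → ℕ
  | 0, _, b, a => if a = b then 0 else 1
  | n + 1, M, b, a => ∑ c ∈ (M 0).erase a, pathCount n (fun i => M (i + 1)) b c

/-- The colorings counted by `pathCount`, as functions on all `n + 2` vertices of the path, the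
two end vertices included. -/
def pathSet : (n : ℕ) → (ℕ → Finset ℕ) → ℕ → ℕ → Finset (Fin (n + 2) → ℕ)
  | 0, _, b, a => if a = b then ∅ else {![a, b]}
  | n + 1, M, b, a => ((M 0).erase a).biUnion fun c =>
      (pathSet n (fun i => M (i + 1)) b c).image (Fin.cons (α := fun _ => ℕ) a)

lemma mem_pathSet (n : ℕ) (M : ℕ → Finset ℕ) (b a : ℕ) (h : Fin (n + 2) → ℕ) :
    h ∈ pathSet n M b a ↔ h 0 = a ∧ h (Fin.last _) = b ∧
      (∀ i : Fin n, h i.succ.castSucc ∈ M i) ∧ ∀ i : Fin (n + 1), h i.castSucc ≠ h i.succ := by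
  induction n generalizing M a with
  | zero =>
    have hl : (Fin.last (0 + 1)) = (1 : Fin 2) := rfl
    simp only [pathSet, hl]
    constructor
    · intro hh
      split_ifs at hh with hab
      · simp at hh
      · simp only [Finset.mem_singleton] at hh
        subst hh
        exact ⟨rfl, rfl, fun i => i.elim0, fun i => by fin_cases i; exact hab⟩
    · rintro ⟨h0, h1, -, h2⟩
      have h2' : h 0 ≠ h 1 := h2 0
      rw [h0, h1] at h2'
      rw [if_neg h2', Finset.mem_singleton]
      funext i
      fin_cases i
      · exact h0
      · exact h1
  | succ n ih =>
    simp only [pathSet, Finset.mem_biUnion, Finset.mem_image, Finset.mem_erase]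
    constructor
    · rintro ⟨c, ⟨hca, hc⟩, g, hg, rfl⟩
      obtain ⟨g0, g1, g2, g3⟩ := (ih _ _ _).1 hg
      refine ⟨rfl, ?_, ?_, ?_⟩
      · rw [← Fin.succ_last, Fin.cons_succ, g1]
      · intro i
        refine Fin.cases ?_ (fun j => ?_) i
        · change g 0 ∈ M 0
          rwa [g0]
        · exact g2 j
      · intro i
        refine Fin.cases ?_ (fun j => ?_) i
        · change a ≠ g 0
          rw [g0]
          exact hca.symm
        · exact g3 j
    · rintro ⟨h0, h1, h2, h3⟩
      refine ⟨h 1, ⟨?_, h2 0⟩, Fin.tail h, ?_, ?_⟩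
      · rw [← h0]
        exact (h3 0).symm
      · exact (ih _ _ _).2 ⟨rfl, h1, fun i => h2 i.succ, fun i => h3 i.succ⟩
      · rw [← h0]
        exact Fin.cons_self_tail h

lemma card_pathSet (n : ℕ) (M : ℕ → Finset ℕ) (b a : ℕ) :
    (pathSet n M b a).card = pathCount n M b a := by
  induction n generalizing M a with
  | zero =>
    simp only [pathSet, pathCount]
    split_ifs <;> simp
  | succ n ih =>
    simp only [pathSet, pathCount]
    rw [Finset.card_biUnion]
    · refine Finset.sum_congr rfl fun c _ => ?_
      rw [Finset.card_image_of_injective _ (Fin.cons_right_injective (α := fun _ => ℕ) a), ih]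
    · intro c _ d _ hcd
      rw [Function.onFun, Finset.disjoint_left]
      intro f hf hf'
      obtain ⟨g, hg, rfl⟩ := Finset.mem_image.1 hf
      obtain ⟨g', hg', hgg⟩ := Finset.mem_image.1 hf'
      have : g' = g := Fin.cons_right_injective (α := fun _ => ℕ) a hgg
      subst this
      exact hcd (((mem_pathSet _ _ _ _ _).1 hg).1.symm.trans ((mem_pathSet _ _ _ _ _).1 hg').1)

/-! ### Bounds for path counts with lists of size three -/

lemma two_le_card_erase {D : Finset ℕ} (hD : D.card = 3) (c : ℕ) : 2 ≤ (D.erase c).card := by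
  have := Finset.pred_card_le_card_erase (s := D) (a := c)
  omega

/-- With one end colored `b` and the other end restricted to a list `D` of size three, there are
at least `2 ^ (n + 1)` colorings: coloring from the end `b`, each vertex has two choices. -/
lemma sum_pathCount_start_ge (n : ℕ) (M : ℕ → Finset ℕ) (hM : ∀ i, (M i).card = 3) (b : ℕ)
    (D : Finset ℕ) (hD : D.card = 3) : 2 ^ (n + 1) ≤ ∑ a ∈ D, pathCount n M b a := by
  induction n generalizing M D with
  | zero =>
    have : ∑ a ∈ D, pathCount 0 M b a = (D.erase b).card := by
      rw [Finset.card_eq_sum_ones, ← Finset.filter_ne', Finset.sum_filter]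
      refine Finset.sum_congr rfl fun a _ => ?_
      by_cases h : a = b <;> simp [pathCount, h]
    rw [this]
    exact two_le_card_erase hD b
  | succ n ih =>
    have key : ∑ a ∈ D, pathCount (n + 1) M b a
        = ∑ c ∈ M 0, (D.erase c).card * pathCount n (fun i => M (i + 1)) b c := by
      simp only [pathCount, ← Finset.filter_ne', Finset.sum_filter]
      rw [Finset.sum_comm]
      refine Finset.sum_congr rfl fun c _ => ?_
      rw [← Finset.sum_filter, Finset.sum_const, smul_eq_mul]
      congr 2
      ext x
      simp [ne_comm]
    rw [key]
    have h1 := ih (fun i => M (i + 1)) (fun i => hM _) (M 0) (hM 0)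
    calc 2 ^ (n + 1 + 1) = 2 * 2 ^ (n + 1) := by ring
      _ ≤ 2 * ∑ c ∈ M 0, pathCount n (fun i => M (i + 1)) b c := by gcongr
      _ ≤ _ := by
        rw [Finset.mul_sum]
        gcongr with c _
        exact two_le_card_erase hD c

lemma sum_pathCount_end_ge (n : ℕ) (M : ℕ → Finset ℕ) (hM : ∀ i, (M i).card = 3) (a : ℕ)
    (B : Finset ℕ) (hB : B.card = 3) : 2 ^ (n + 1) ≤ ∑ b ∈ B, pathCount n M b a := by
  induction n generalizing M a with
  | zero =>
    have : ∑ b ∈ B, pathCount 0 M b a = (B.erase a).card := by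
      rw [Finset.card_eq_sum_ones, ← Finset.filter_ne', Finset.sum_filter]
      refine Finset.sum_congr rfl fun c _ => ?_
      by_cases h : c = a
      · simp [pathCount, h]
      · simp [pathCount, h, Ne.symm h]
    rw [this]
    exact two_le_card_erase hB a
  | succ n ih =>
    simp only [pathCount]
    rw [Finset.sum_comm]
    calc 2 ^ (n + 1 + 1) = 2 * 2 ^ (n + 1) := by ring
      _ ≤ ((M 0).erase a).card * 2 ^ (n + 1) := by
        gcongr
        exact two_le_card_erase (hM 0) a
      _ = ∑ c ∈ (M 0).erase a, 2 ^ (n + 1) := by rw [Finset.sum_const, smul_eq_mul]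
      _ ≤ _ := Finset.sum_le_sum fun c _ => ih _ (fun i => hM _) c

lemma sum_pathCount_ge (n : ℕ) (M : ℕ → Finset ℕ) (hM : ∀ i, (M i).card = 3)
    (A B : Finset ℕ) (hA : A.card = 3) (hB : B.card = 3) :
    3 * 2 ^ (n + 1) ≤ ∑ a ∈ A, ∑ b ∈ B, pathCount n M b a := by
  calc 3 * 2 ^ (n + 1) = ∑ a ∈ A, 2 ^ (n + 1) := by rw [Finset.sum_const, smul_eq_mul, hA]
    _ ≤ _ := Finset.sum_le_sum fun a _ => sum_pathCount_end_ge n M hM a B hB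

/-- Two different colors `c₁`, `c₂` of the first vertex together allow every color of the second
vertex once, and at least one color `d ∉ {c₁, c₂}` twice. -/
lemma pathCount_add_two_ge (n : ℕ) (M : ℕ → Finset ℕ) (hM : ∀ i, (M i).card = 3) (b a m : ℕ)
    (hm : ∀ d, m ≤ pathCount n (fun i => M (i + 2)) b d) :
    2 ^ (n + 1) + m ≤ pathCount (n + 2) M b a := by
  obtain ⟨c₁, hc₁, c₂, hc₂, hne⟩ := Finset.one_lt_card.1 (two_le_card_erase (hM 0) a)
  have hS := sum_pathCount_start_ge n (fun i => M (i + 2)) (fun i => hM _) b (M 1) (hM 1)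
  set r := pathCount n (fun i => M (i + 2)) b with hr
  have h1 : ∑ c ∈ ({c₁, c₂} : Finset ℕ), ∑ d ∈ (M 1).erase c, r d ≤ pathCount (n + 2) M b a := by
    simp only [pathCount]
    refine Finset.sum_le_sum_of_subset ?_
    intro x hx
    simp only [Finset.mem_insert, Finset.mem_singleton] at hx
    rcases hx with rfl | rfl <;> assumption
  rw [Finset.sum_pair hne] at h1
  have hd : (((M 1).erase c₁).erase c₂).Nonempty := by
    rw [← Finset.card_pos]
    have h2 := two_le_card_erase (hM 1) c₁
    have h3 := Finset.pred_card_le_card_erase (s := (M 1).erase c₁) (a := c₂)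
    omega
  obtain ⟨d, hd⟩ := hd
  have hmd := hm d
  simp only [Finset.mem_erase] at hd
  obtain ⟨hd2, hd1, hd0⟩ := hd
  have h4 : ∑ x ∈ M 1, r x + r d
      ≤ ∑ x ∈ (M 1).erase c₁, r x + ∑ x ∈ (M 1).erase c₂, r x := by
    have e : r d = ∑ x ∈ M 1, if x = d then r x else 0 := by
      rw [Finset.sum_ite_eq' (M 1) d, if_pos hd0]
    rw [e, ← Finset.filter_ne', ← Finset.filter_ne', Finset.sum_filter, Finset.sum_filter,
      ← Finset.sum_add_distrib, ← Finset.sum_add_distrib]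
    refine Finset.sum_le_sum fun x _ => ?_
    grind
  omega

lemma pathCount_odd_ge (j : ℕ) (M : ℕ → Finset ℕ) (hM : ∀ i, (M i).card = 3) (b a : ℕ) :
    4 ^ (j + 1) ≤ 3 * pathCount (2 * j + 1) M b a + 1 := by
  induction j generalizing M a with
  | zero =>
    have h1 : pathCount 1 M b a = (((M 0).erase a).erase b).card := by
      simp only [pathCount]
      rw [Finset.card_eq_sum_ones, ← Finset.filter_ne' _ b, Finset.sum_filter]
      refine Finset.sum_congr rfl fun c _ => ?_
      by_cases h : c = b <;> simp [h]
    have h2 := two_le_card_erase (hM 0) a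
    have h3 := Finset.pred_card_le_card_erase (s := (M 0).erase a) (a := b)
    simp only [mul_zero, zero_add, h1]
    omega
  | succ j ih =>
    have h4 : 4 ^ (j + 1) = 2 ^ (2 * j + 1 + 1) := by
      rw [show (4 : ℕ) = 2 ^ 2 from rfl, ← pow_mul]
      rfl
    have h5 := pathCount_add_two_ge (2 * j + 1) M hM b a ((4 ^ (j + 1) - 1) / 3) (fun d => by
      have := ih (fun i => M (i + 2)) (fun i => hM _) d
      omega)
    have h6 : 3 ∣ 4 ^ (j + 1) - 1 := by
      simpa using Nat.sub_dvd_pow_sub_pow 4 1 (j + 1)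
    have h7 : 0 < 4 ^ (j + 1) := by positivity
    have h8 : 4 ^ (j + 1 + 1) = 4 * 4 ^ (j + 1) := by ring
    rw [← h4] at h5
    rw [show 2 * (j + 1) + 1 = 2 * j + 1 + 2 from rfl]
    omega

/-- The number of closed and of open walks of length `n + 1` in a triangle. -/
lemma pathCount_const (n : ℕ) (b a : ℕ) (ha : a ∈ Finset.Icc 1 3) (hb : b ∈ Finset.Icc 1 3) :
    3 * (pathCount n (fun _ => Finset.Icc 1 3) b a : ℤ)
      = 2 ^ (n + 1) + (-1) ^ (n + 1) * (if a = b then 2 else -1) := by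
  induction n generalizing a with
  | zero =>
    by_cases h : a = b <;> simp [pathCount, h]
  | succ n ih =>
    have e : Finset.Icc 1 3 = ({1, 2, 3} : Finset ℕ) := by decide
    have h1 := ih 1 (by decide)
    have h2 := ih 2 (by decide)
    have h3 := ih 3 (by decide)
    simp only [pathCount]
    generalize pathCount n (fun _ => Finset.Icc 1 3) b = r at *
    have s1 : (Finset.Icc 1 3).erase 1 = ({2, 3} : Finset ℕ) := by decide
    have s2 : (Finset.Icc 1 3).erase 2 = ({1, 3} : Finset ℕ) := by decide
    have s3 : (Finset.Icc 1 3).erase 3 = ({1, 2} : Finset ℕ) := by decide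
    rw [e] at ha hb
    simp only [Finset.mem_insert, Finset.mem_singleton] at ha hb
    rw [pow_succ 2 (n + 1), pow_succ (-1) (n + 1)]
    rcases ha with rfl | rfl | rfl <;> rcases hb with rfl | rfl | rfl <;>
      simp [s1, s2, s3] at h1 h2 h3 ⊢ <;> linarith

/-! ### The weight contributed by the two short paths -/

lemma one_le_card_sdiff {X : Finset ℕ} (hX : X.card = 3) (a b : ℕ) :
    1 ≤ (X \ {a, b}).card := by
  have h1 := Finset.le_card_sdiff {a, b} X
  have h2 : ({a, b} : Finset ℕ).card ≤ 2 := Finset.card_le_two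
  omega

lemma two_le_card_sdiff {X : Finset ℕ} (hX : X.card = 3) (a : ℕ) :
    2 ≤ (X \ {a, a}).card := by
  have h1 := Finset.le_card_sdiff {a, a} X
  have h2 : ({a, a} : Finset ℕ).card = 1 := by simp
  omega

/-- Double counting: a color `c ∈ X` survives for `|U \ c| * |V \ c|` pairs of end colors, which
is at least `6`, or at least `4` if `c ∈ U ∩ V`. -/
lemma sum_card_sdiff_ge (U V X : Finset ℕ) (hU : U.card = 3) (hV : V.card = 3)
    (hX : X.card = 3) :
    18 ≤ ∑ a ∈ U, ∑ b ∈ V, (X \ {a, b}).card + 2 * (U ∩ V).card := by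
  have h1 : ∀ a b, (X \ {a, b}).card =
      ∑ c ∈ X, (if c ≠ a then 1 else 0) * (if c ≠ b then 1 else 0) := by
    intro a b
    rw [Finset.card_eq_sum_ones, Finset.sdiff_eq_filter, Finset.sum_filter]
    refine Finset.sum_congr rfl fun c _ => ?_
    by_cases ha : c = a <;> by_cases hb : c = b <;> simp [ha, hb]
  have hcard : ∀ (D : Finset ℕ) (c : ℕ), ∑ a ∈ D, (if c ≠ a then 1 else 0) = (D.erase c).card := by
    intro D c
    rw [Finset.card_eq_sum_ones, ← Finset.filter_ne', Finset.sum_filter]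
    exact Finset.sum_congr rfl fun a _ => by simp [ne_comm]
  have h2 : ∑ a ∈ U, ∑ b ∈ V, (X \ {a, b}).card
      = ∑ c ∈ X, (U.erase c).card * (V.erase c).card := by
    simp only [h1]
    rw [Finset.sum_congr rfl fun a _ => Finset.sum_comm, Finset.sum_comm]
    refine Finset.sum_congr rfl fun c _ => ?_
    rw [← Finset.sum_mul_sum, hcard, hcard]
  have h3 : ∑ c ∈ X, (if c ∈ U ∩ V then 1 else 0) ≤ (U ∩ V).card := by
    rw [← Finset.sum_filter, ← Finset.card_eq_sum_ones]
    refine Finset.card_le_card fun x hx => (Finset.mem_filter.1 hx).2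
  have h4 : 18 ≤ ∑ c ∈ X, ((U.erase c).card * (V.erase c).card
      + 2 * (if c ∈ U ∩ V then 1 else 0)) := by
    calc 18 = ∑ c ∈ X, 6 := by rw [Finset.sum_const, hX]; rfl
      _ ≤ _ := Finset.sum_le_sum fun c _ => by
        by_cases hcU : c ∈ U <;> by_cases hcV : c ∈ V <;>
          simp [Finset.card_erase_of_mem, Finset.erase_eq_of_notMem, hcU, hcV, hU, hV]
  rw [Finset.sum_add_distrib, ← Finset.mul_sum] at h4
  omega

lemma sum_weight_ge (U V X Y : Finset ℕ) (hU : U.card = 3) (hV : V.card = 3)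
    (hX : X.card = 3) (hY : Y.card = 3) (hUV : U ≠ V) :
    21 ≤ ∑ a ∈ U, ∑ b ∈ V, (X \ {a, b}).card * (Y \ {a, b}).card := by
  have hd : (U ∩ V).card ≤ 2 := by
    by_contra! h
    have e1 : U ∩ V = U := Finset.eq_of_subset_of_card_le Finset.inter_subset_left (by omega)
    have e2 : U ∩ V = V := Finset.eq_of_subset_of_card_le Finset.inter_subset_right (by omega)
    exact hUV (e1.symm.trans e2)
  have hx := sum_card_sdiff_ge U V X hU hV hX
  have hy := sum_card_sdiff_ge U V Y hU hV hY
  have hdiag : ∑ a ∈ U, ∑ b ∈ V, (if a = b then 1 else 0) = (U ∩ V).card := by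
    simp [Finset.sum_ite_eq]
  have hone : ∑ a ∈ U, ∑ b ∈ V, 1 = 9 := by simp [hU, hV]
  have hsum : ∑ a ∈ U, ∑ b ∈ V,
      ((X \ {a, b}).card + (Y \ {a, b}).card + (if a = b then 1 else 0))
      ≤ ∑ a ∈ U, ∑ b ∈ V, ((X \ {a, b}).card * (Y \ {a, b}).card + 1) := by
    refine Finset.sum_le_sum fun a _ => Finset.sum_le_sum fun b _ => ?_
    by_cases hab : a = b
    · subst hab
      have h1 := two_le_card_sdiff hX a
      have h2 := two_le_card_sdiff hY a
      rw [if_pos rfl]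
      nlinarith
    · have h1 := one_le_card_sdiff hX a b
      have h2 := one_le_card_sdiff hY a b
      rw [if_neg hab]
      nlinarith
  simp only [Finset.sum_add_distrib] at hsum
  rw [hdiag, hone] at hsum
  omega

/-! ### Decomposition of the colorings of the theta graph -/

/-- The list of the `i`-th interior vertex of the long path, that is of vertex `i + 4`; a
three-element dummy list when there is no such vertex. -/
def longList {k : ℕ} (L : Fin (2*k+3) → Finset ℕ) (i : ℕ) : Finset ℕ :=
  if h : i + 4 < 2*k+3 then L ⟨i + 4, h⟩ else Finset.Icc 1 3

/-- The vertex of the theta graph at position `i` of the long path, from `0` to `1`. -/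
def longVertex (k : ℕ) (i : Fin (2*k-1+2)) : Fin (2*k+3) :=
  if i.val = 0 then 0 else if h : i.val + 3 < 2*k+3 then ⟨i.val + 3, h⟩ else 1

/-- The coloring of the theta graph with colors `x`, `y` on the vertices `2`, `3` and `h` on the
long path. -/
def glue (k : ℕ) (hk : 2 ≤ k) (x y : ℕ) (h : Fin (2*k-1+2) → ℕ) (w : Fin (2*k+3)) : ℕ :=
  if w.val = 0 then h 0 else if w.val = 1 then h (Fin.last _) else
  if w.val = 2 then x else if w.val = 3 then y else h ⟨w.val - 3, by omega⟩

lemma isProper_iff (k : ℕ) (L : Fin (2*k+3) → Finset ℕ) (f : Fin (2*k+3) → ℕ) :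
    IsProperListColoring (thetaGraph k) L f ↔ (∀ v, f v ∈ L v) ∧ ∀ a b : Fin (2*k+3),
      ((a.val = 0 ∧ b.val = 2) ∨ (a.val = 2 ∧ b.val = 1) ∨
      (a.val = 0 ∧ b.val = 3) ∨ (a.val = 3 ∧ b.val = 1) ∨
      (a.val = 0 ∧ b.val = 4) ∨
      (4 ≤ a.val ∧ b.val = a.val + 1 ∧ a.val + 1 ≤ 2*k+2) ∨
      (a.val = 2*k+2 ∧ b.val = 1)) → f a ≠ f b := by
  simp only [IsProperListColoring, thetaGraph, SimpleGraph.fromRel_adj]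
  refine and_congr_right fun _ => ⟨fun h a b hab => h ⟨?_, Or.inl hab⟩, fun h a b hab => ?_⟩
  · rintro rfl
    omega
  · rcases hab.2 with h1 | h1
    · exact h a b h1
    · exact (h b a h1).symm

lemma mem_pathSet' (n : ℕ) (M : ℕ → Finset ℕ) (b a : ℕ) (h : Fin (n + 2) → ℕ) :
    h ∈ pathSet n M b a ↔ h ⟨0, by omega⟩ = a ∧ h ⟨n + 1, by omega⟩ = b ∧
      (∀ i (hi : i < n), h ⟨i + 1, by omega⟩ ∈ M i) ∧
      ∀ i (hi : i < n + 1), h ⟨i, by omega⟩ ≠ h ⟨i + 1, by omega⟩ := by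
  rw [mem_pathSet]
  exact ⟨fun ⟨h0, h1, h2, h3⟩ => ⟨h0, h1, fun i hi => h2 ⟨i, hi⟩, fun i hi => h3 ⟨i, hi⟩⟩,
    fun ⟨h0, h1, h2, h3⟩ => ⟨h0, h1, fun i => h2 i.1 i.2, fun i => h3 i.1 i.2⟩⟩

lemma glue_eq (k : ℕ) (hk : 2 ≤ k) (x y : ℕ) (h : Fin (2*k-1+2) → ℕ) :
    (∀ hw, glue k hk x y h ⟨0, hw⟩ = h ⟨0, by omega⟩) ∧
    (∀ hw, glue k hk x y h ⟨1, hw⟩ = h ⟨2*k-1+1, by omega⟩) ∧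
    (∀ hw, glue k hk x y h ⟨2, hw⟩ = x) ∧ (∀ hw, glue k hk x y h ⟨3, hw⟩ = y) ∧
    ∀ i hw, glue k hk x y h ⟨i + 4, hw⟩ = h ⟨i + 1, by omega⟩ :=
  ⟨fun _ => rfl, fun _ => rfl, fun _ => rfl, fun _ => rfl, fun _ _ => rfl⟩

lemma longVertex_eq (k : ℕ) (hk : 2 ≤ k) :
    (∀ hw, longVertex k ⟨0, hw⟩ = ⟨0, by omega⟩) ∧
    (∀ hw, longVertex k ⟨2*k-1+1, hw⟩ = ⟨1, by omega⟩) ∧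
    ∀ i hw (hi : i + 4 < 2*k+3), longVertex k ⟨i + 1, hw⟩ = ⟨i + 4, hi⟩ := by
  refine ⟨fun _ => rfl, fun _ => ?_, fun i _ hi => ?_⟩
  · have h1 : ¬ (2*k-1+1 = 0) := by omega
    have h2 : ¬ (2*k-1+1+3 < 2*k+3) := by omega
    simp only [longVertex, h1, h2, if_false, dif_neg, not_false_iff]
    rfl
  · simp only [longVertex]
    rw [if_neg (by omega), dif_pos hi]

/-- Given the colors of the two end vertices, the three paths are colored independently. -/
lemma numListColorings_theta (k : ℕ) (hk : 2 ≤ k) (L : Fin (2*k+3) → Finset ℕ) :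
    numListColorings (thetaGraph k) L = ∑ a ∈ L 0, ∑ b ∈ L 1,
      (L ⟨2, by omega⟩ \ {a, b}).card * (L ⟨3, by omega⟩ \ {a, b}).card *
        pathCount (2*k-1) (longList L) b a := by
  classical
  have hfin : numListColorings (thetaGraph k) L
      = ((Fintype.piFinset L).filter (IsProperListColoring (thetaGraph k) L)).card := by
    refine Nat.subtype_card _ fun f => ?_
    rw [Finset.mem_filter, Fintype.mem_piFinset]
    exact ⟨fun h => h.2, fun h => ⟨h.1, h⟩⟩
  have hsig : ((L 0 ×ˢ L 1).sigma fun p => (L ⟨2, by omega⟩ \ {p.1, p.2}) ×ˢ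
      (L ⟨3, by omega⟩ \ {p.1, p.2}) ×ˢ pathSet (2*k-1) (longList L) p.2 p.1).card =
      ∑ a ∈ L 0, ∑ b ∈ L 1,
      (L ⟨2, by omega⟩ \ {a, b}).card * (L ⟨3, by omega⟩ \ {a, b}).card *
        pathCount (2*k-1) (longList L) b a := by
    rw [Finset.card_sigma, Finset.sum_product]
    simp only [Finset.card_product, card_pathSet, mul_assoc]
  rw [hfin, ← hsig]
  obtain ⟨v0, v1, v2⟩ := longVertex_eq k hk
  have hlist : ∀ i (hi : i + 4 < 2*k+3), longList L i = L ⟨i + 4, hi⟩ := fun i hi => by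
    simp only [longList]
    rw [dif_pos hi]
  refine Finset.card_nbij'
    (fun f => ⟨(f ⟨0, by omega⟩, f ⟨1, by omega⟩),
      (f ⟨2, by omega⟩, f ⟨3, by omega⟩, fun i => f (longVertex k i))⟩)
    (fun s => glue k hk s.2.1 s.2.2.1 s.2.2.2) ?_ ?_ ?_ ?_
  · intro f hf
    rw [Finset.mem_coe, Finset.mem_filter, isProper_iff] at hf
    obtain ⟨-, hmem, hadj⟩ := hf
    simp only [Finset.coe_sigma, Set.mem_sigma_iff, Finset.mem_coe, Finset.mem_product,
      Finset.mem_sdiff, Finset.mem_insert, Finset.mem_singleton, not_or, mem_pathSet']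
    refine ⟨⟨hmem _, hmem _⟩, ⟨hmem _, (hadj _ _ ?_).symm, hadj _ _ ?_⟩,
      ⟨hmem _, (hadj _ _ ?_).symm, hadj _ _ ?_⟩, ?_, ?_, ?_, ?_⟩
    · simp
    · simp
    · simp
    · simp
    · rw [v0]
    · rw [v1]
    · intro i hi
      rw [v2 i _ (by omega), hlist i (by omega)]
      exact hmem _
    · intro i hi
      rcases Nat.eq_zero_or_pos i with rfl | h0
      · rw [v0, v2 0 _ (by omega)]
        exact hadj _ _ (by simp)
      · obtain ⟨j, rfl⟩ : ∃ j, i = j + 1 := ⟨i - 1, by omega⟩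
        rw [v2 j _ (by omega)]
        by_cases hl : j + 1 = 2*k-1
        · have e : (⟨j + 1 + 1, by omega⟩ : Fin (2*k-1+2)) = ⟨2*k-1+1, by omega⟩ := by
            simp only [Fin.mk.injEq]
            omega
          rw [e, v1]
          refine hadj _ _ ?_
          simp only [and_true, true_and]
          omega
        · rw [v2 (j + 1) _ (by omega)]
          refine hadj _ _ ?_
          simp only [and_true, true_and]
          omega
  · rintro ⟨⟨a, b⟩, x, y, h⟩ hs
    simp only [Finset.coe_sigma, Set.mem_sigma_iff, Finset.mem_coe, Finset.mem_product,
      Finset.mem_sdiff, Finset.mem_insert, Finset.mem_singleton, not_or, mem_pathSet'] at hs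
    obtain ⟨⟨ha, hb⟩, ⟨hx, hxa, hxb⟩, ⟨hy, hya, hyb⟩, h0, h1, h2, h3⟩ := hs
    obtain ⟨g0, g1, g2, g3, g4⟩ := glue_eq k hk x y h
    have hmem : ∀ v, glue k hk x y h v ∈ L v := by
      rintro ⟨v, hv⟩
      match v, hv with
      | 0, hv => rw [g0, h0]; exact ha
      | 1, hv => rw [g1, h1]; exact hb
      | 2, hv => rw [g2]; exact hx
      | 3, hv => rw [g3]; exact hy
      | i + 4, hv =>
        rw [g4, ← hlist i hv]
        exact h2 i (by omega)
    rw [Finset.mem_coe, Finset.mem_filter, isProper_iff, Fintype.mem_piFinset]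
    refine ⟨hmem, hmem, ?_⟩
    rintro ⟨v, hv⟩ ⟨w, hw⟩ hvw
    change glue k hk x y h _ ≠ glue k hk x y h _
    simp only at hvw
    rcases hvw with ⟨rfl, rfl⟩ | ⟨rfl, rfl⟩ | ⟨rfl, rfl⟩ | ⟨rfl, rfl⟩ | ⟨rfl, rfl⟩ |
      ⟨hv4, rfl, hle⟩ | ⟨hv2, rfl⟩
    · rw [g0, g2, h0]; exact Ne.symm hxa
    · rw [g1, g2, h1]; exact hxb
    · rw [g0, g3, h0]; exact Ne.symm hya
    · rw [g1, g3, h1]; exact hyb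
    · rw [g0, g4 0]; exact h3 0 (by omega)
    · obtain ⟨j, rfl⟩ : ∃ j, v = j + 4 := ⟨v - 4, by omega⟩
      rw [g4, g4 (j + 1)]
      exact h3 (j + 1) (by omega)
    · obtain ⟨j, rfl⟩ : ∃ j, v = j + 4 := ⟨v - 4, by omega⟩
      rw [g4, g1]
      obtain rfl : j = 2*k-1-1 := by omega
      have := h3 (2*k-1-1+1) (by omega)
      convert this using 3
      omega
  · intro f _
    obtain ⟨g0, g1, g2, g3, g4⟩ := glue_eq k hk (f ⟨2, by omega⟩) (f ⟨3, by omega⟩)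
      (fun i => f (longVertex k i))
    funext ⟨v, hv⟩
    match v, hv with
    | 0, hv => exact g0 hv
    | 1, hv => exact (g1 hv).trans (by rw [v1])
    | 2, hv => rfl
    | 3, hv => rfl
    | i + 4, hv => exact (g4 i hv).trans (by rw [v2 i _ hv])
  · rintro ⟨⟨a, b⟩, x, y, h⟩ hs
    simp only [Finset.coe_sigma, Set.mem_sigma_iff, Finset.mem_coe, mem_pathSet',
      Finset.mem_product] at hs
    obtain ⟨-, -, -, h0, h1, -, -⟩ := hs
    obtain ⟨g0, g1, g2, g3, g4⟩ := glue_eq k hk x y h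
    have hh : (fun i => glue k hk x y h (longVertex k i)) = h := by
      funext ⟨i, hi⟩
      match i, hi with
      | 0, hi => rfl
      | j + 1, hi =>
        by_cases hj : j + 4 < 2*k+3
        · rw [v2 j _ hj, g4]
        · obtain rfl : j = 2*k-1 := by omega
          rw [v1, g1]
    simp only [hh, g0, g1, g2, g3, h0, h1]

lemma chromPoly_theta (k : ℕ) (hk : 2 ≤ k) : chromPoly (thetaGraph k) 3 = 6 * 4 ^ k + 6 := by
  have hlist : longList (k := k) (fun _ => Finset.Icc 1 3) = fun _ => Finset.Icc 1 3 := by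
    funext i
    simp [longList]
  have hp : ∀ a ∈ Finset.Icc 1 3, ∀ b ∈ Finset.Icc 1 3,
      3 * (pathCount (2*k-1) (fun _ => Finset.Icc 1 3) b a : ℤ)
        = 4 ^ k + (if a = b then 2 else -1) := by
    intro a ha b hb
    rw [pathCount_const _ b a ha hb, show 2*k-1+1 = 2*k by omega, pow_mul, pow_mul]
    norm_num
  rw [chromPoly, numListColorings_theta k hk, hlist]
  have e : Finset.Icc 1 3 = ({1, 2, 3} : Finset ℕ) := by decide
  generalize pathCount (2*k-1) (fun _ => Finset.Icc 1 3) = r at *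
  have hs : ∀ a ∈ Finset.Icc 1 3, ∀ b ∈ Finset.Icc 1 3,
      (Finset.Icc 1 3 \ {a, b}).card = if a = b then 2 else 1 := by decide
  have hterm : ∀ a ∈ Finset.Icc 1 3, ∀ b ∈ Finset.Icc 1 3,
      3 * (((Finset.Icc 1 3 \ {a, b}).card * (Finset.Icc 1 3 \ {a, b}).card * r b a : ℕ) : ℤ)
        = if a = b then 4 * (4 ^ k + 2) else 4 ^ k - 1 := by
    intro a ha b hb
    have := hp a ha b hb
    rw [hs a ha b hb]
    split_ifs at this ⊢ <;> push_cast <;> linarith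
  have hz : 3 * ((∑ a ∈ Finset.Icc 1 3, ∑ b ∈ Finset.Icc 1 3,
      (Finset.Icc 1 3 \ {a, b}).card * (Finset.Icc 1 3 \ {a, b}).card * r b a : ℕ) : ℤ)
      = 3 * (6 * 4 ^ k + 6) := by
    rw [Nat.cast_sum, Finset.mul_sum]
    simp_rw [Nat.cast_sum, Finset.mul_sum]
    rw [Finset.sum_congr rfl fun a ha => Finset.sum_congr rfl fun b hb => hterm a ha b hb, e]
    simp
    ring
  have hz' := mul_left_cancel₀ (by norm_num) hz
  exact_mod_cast hz'

/-- Let `G = Θ(2,2,2k)` with `k ≥ 2`, end vertices `u = 0` and `v = 1`, and let `L` be a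
`3`-assignment for `G` with `L(u) ≠ L(v)`.  Then `P(G,L) ≥ P(G,3)`. -/
theorem theta_differentLists_three_ge_chromPoly (k : ℕ) (hk : 2 ≤ k)
    (L : Fin (2*k+3) → Finset ℕ) (hL : ∀ v, (L v).card = 3) (huv : L 0 ≠ L 1) :
    chromPoly (thetaGraph k) 3 ≤ numListColorings (thetaGraph k) L := by
  rw [chromPoly_theta k hk, numListColorings_theta k hk]
  have hM : ∀ i, (longList L i).card = 3 := by
    intro i
    simp only [longList]
    split_ifs
    · exact hL _
    · rfl
  have hW := sum_weight_ge (L 0) (L 1) (L ⟨2, by omega⟩) (L ⟨3, by omega⟩)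
    (hL _) (hL _) (hL _) (hL _) huv
  have hN := sum_pathCount_ge (2*k-1) (longList L) hM (L 0) (L 1) (hL _) (hL _)
  have hq : ∀ a b, 4 ^ k ≤ 3 * pathCount (2*k-1) (longList L) b a + 1 := by
    intro a b
    obtain ⟨j, rfl⟩ : ∃ j, k = j + 1 := ⟨k - 1, by omega⟩
    exact pathCount_odd_ge j _ hM b a
  have hpow : 2 ^ (2*k-1+1) = 4 ^ k := by
    rw [show 2*k-1+1 = 2*k by omega, pow_mul]
    rfl
  have h16 : 16 ≤ 4 ^ k := le_trans (by norm_num) (Nat.pow_le_pow_right (n := 4) (by norm_num) hk)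
  rw [hpow] at hN
  -- `4 ^ k - 1` replaces `3 * q`, which avoids the division by three.
  have hsum : ∑ a ∈ L 0, ∑ b ∈ L 1,
      ((L ⟨2, by omega⟩ \ {a, b}).card * (L ⟨3, by omega⟩ \ {a, b}).card * (4 ^ k - 1)
        + 3 * pathCount (2*k-1) (longList L) b a)
      ≤ ∑ a ∈ L 0, ∑ b ∈ L 1,
      (3 * ((L ⟨2, by omega⟩ \ {a, b}).card * (L ⟨3, by omega⟩ \ {a, b}).card *
        pathCount (2*k-1) (longList L) b a) + (4 ^ k - 1)) := by
    refine Finset.sum_le_sum fun a _ => Finset.sum_le_sum fun b _ => ?_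
    have h1 := Nat.mul_le_mul (one_le_card_sdiff (hL ⟨2, by omega⟩) a b)
      (one_le_card_sdiff (hL ⟨3, by omega⟩) a b)
    have h2 : 4 ^ k - 1 ≤ 3 * pathCount (2*k-1) (longList L) b a := by
      have := hq a b
      omega
    -- `(w - 1) * (3 * N - (4 ^ k - 1)) ≥ 0` with `w` the product of the two weights
    nlinarith
  have hconst : ∑ a ∈ L 0, ∑ b ∈ L 1, (4 ^ k - 1) = 9 * (4 ^ k - 1) := by
    simp only [Finset.sum_const, hL, smul_eq_mul]
    ring
  simp only [Finset.sum_add_distrib, ← Finset.mul_sum, ← Finset.sum_mul] at hsum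
  rw [hconst] at hsum
  have hW' := Nat.mul_le_mul_right (4 ^ k - 1) hW
  omega
end

section
/- Let G = Θ(2,2,2k) with k ≥ 2. Then P_ℓ(G,m) = P(G,m) for every integer m ≥ 3. -/
/-! ### Path counts -/

namespace ThetaList

open Finset

/-- `W Λ c n d` is the number of proper list colorings of a path with lists `Λ 0, …, Λ n` that start
with the color `c` and end with the color `d`, provided that `c ∈ Λ 0` and `d ∈ Λ n`. For `n ≥ 1` and
`d ∉ Λ n` it counts the colorings of the vertices `0, …, n - 1` whose last color differs from `d`. -/
def W (Λ : ℕ → Finset ℕ) (c : ℕ) : ℕ → ℕ → ℕ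
  | 0, d => if d = c then 1 else 0
  | n + 1, d => ∑ e ∈ (Λ n).erase d, W Λ c n e

/-- The number of colorings of the interior of a path of length `2k` with the palette of size `r + 2`
whose ends have two prescribed distinct colors, i.e. `((r+1)^(2k) - 1) / (r+2)`. -/
def B (r : ℕ) : ℕ → ℕ
  | 0 => 0
  | k + 1 => r * (r + 1) ^ (2 * k) + B r k

/-- The number of indices `j < n` with `Λ j ≠ Λ (j + 1)`. -/
def jumps (Λ : ℕ → Finset ℕ) (n : ℕ) : ℕ := ∑ j ∈ range n, if Λ j = Λ (j + 1) then 0 else 1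

/-- The number of colors in `X` available to a common neighbor of vertices colored `c` and `d`. -/
def N (X : Finset ℕ) (c d : ℕ) : ℕ := ((X.erase c).erase d).card

lemma B_spec (r k : ℕ) : (r + 2) * B r k + 1 = (r + 1) ^ (2 * k) := by
  induction k with
  | zero => simp [B]
  | succ k ih =>
    have : (r + 1) ^ (2 * (k + 1)) = (r + 1) ^ (2 * k) * (r + 1) ^ 2 := by ring
    rw [this, B]
    linear_combination ih

/-- Summing the recursion of `W` over a set `S` of final colors: only the color repeated at the last two
vertices is lost. -/
lemma sum_sum_erase_add (A S : Finset ℕ) (w : ℕ → ℕ) :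
    ∑ d ∈ S, ∑ e ∈ A.erase d, w e + ∑ d ∈ S ∩ A, w d = S.card * ∑ e ∈ A, w e := by
  rw [← filter_mem_eq_inter, sum_filter, ← sum_add_distrib, sum_const_nat]
  intro d _
  split_ifs with h
  · rw [add_comm, add_sum_erase _ _ h]
  · rw [erase_eq_of_notMem h, add_zero]

lemma sum_inter_add_le {A S : Finset ℕ} (w : ℕ → ℕ) {e : ℕ} (he : e ∈ A) (heS : e ∉ S) :
    ∑ d ∈ S ∩ A, w d + w e ≤ ∑ d ∈ A, w d := by
  have hn : e ∉ S ∩ A := fun h => heS (mem_inter.1 h).1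
  rw [add_comm, ← sum_insert hn]
  exact sum_le_sum_of_subset (insert_subset he inter_subset_right)

section

variable {Λ : ℕ → Finset ℕ} {r : ℕ}

/-- Coloring the path from its first vertex on, at least `r + 1` colors are available at each step. -/
lemma pow_le_sum_W (hΛ : ∀ i, (Λ i).card = r + 2) {c : ℕ} (hc : c ∈ Λ 0) (n : ℕ) :
    (r + 1) ^ n ≤ ∑ d ∈ Λ n, W Λ c n d := by
  induction n with
  | zero => simp [W, hc]
  | succ n ih =>
    have h1 := sum_sum_erase_add (Λ n) (Λ (n + 1)) (W Λ c n)
    have h2 : ∑ d ∈ Λ (n + 1) ∩ Λ n, W Λ c n d ≤ ∑ d ∈ Λ n, W Λ c n d :=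
      sum_le_sum_of_subset inter_subset_right
    rw [hΛ] at h1
    have h3 := Nat.mul_le_mul_left (r + 1) ih
    simp only [W]
    rw [pow_succ']
    linarith

/-- Every pair of end colors of a path of even length `2k` extends to at least `B r k` colorings, the
number attained for distinct end colors when all the lists are equal. -/
lemma B_le_W (hΛ : ∀ i, (Λ i).card = r + 2) {c : ℕ} (hc : c ∈ Λ 0) (k d : ℕ) :
    B r k ≤ W Λ c (2 * k) d := by
  induction k generalizing d with
  | zero => simp [B]
  | succ k ih =>
    -- Among the colors of vertex `2k+1` only `r+1` ones are used, so that some color `e` of vertex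
    -- `2k` is not one of them.
    obtain ⟨S, hS, hcard⟩ : ∃ S ⊆ (Λ (2 * k + 1)).erase d, S.card = r + 1 := by
      apply exists_subset_card_eq
      have := pred_card_le_card_erase (s := Λ (2 * k + 1)) (a := d)
      rw [hΛ] at this
      omega
    obtain ⟨e, he, heS⟩ : ∃ e ∈ Λ (2 * k), e ∉ S :=
      exists_mem_notMem_of_card_lt_card (by rw [hΛ, hcard]; omega)
    have h1 := sum_sum_erase_add (Λ (2 * k)) S (W Λ c (2 * k))
    have h2 := sum_inter_add_le (W Λ c (2 * k)) he heS
    have h3 := pow_le_sum_W hΛ hc (2 * k)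
    have h4 := ih e
    have h5 : ∑ x ∈ S, W Λ c (2 * k + 1) x ≤ W Λ c (2 * (k + 1)) d :=
      sum_le_sum_of_subset hS
    simp only [W] at h5
    rw [hcard] at h1
    have h6 := Nat.mul_le_mul_left r h3
    rw [B]
    linarith

/-- The same bound for the colorings with a prescribed last color, extended towards the first vertex. -/
lemma pow_le_sum_start (hΛ : ∀ i, (Λ i).card = r + 2) (n d : ℕ) (hd : d ∈ Λ n) :
    (r + 1) ^ n ≤ ∑ c ∈ Λ 0, W Λ c n d := by
  induction n generalizing d with
  | zero => simp [W, hd]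
  | succ n ih =>
    simp only [W]
    rw [sum_comm, pow_succ']
    have h1 := card_nsmul_le_sum ((Λ n).erase d) (fun e => ∑ c ∈ Λ 0, W Λ c n e) _
      (fun e he => ih e (mem_of_mem_erase he))
    have h2 := pred_card_le_card_erase (s := Λ n) (a := d)
    rw [hΛ] at h2
    exact (Nat.mul_le_mul_right _ h2).trans h1

/-- A path of length `n + 1` has at least as many list colorings as with equal lists, and each change of
list along the path adds `(r+1)^n` to this bound: if `e ∈ Λ j` and `e ∉ Λ (j+1)`, then a coloring of the
first vertices that uses `e` at vertex `j` has `r + 2` extensions to vertex `j + 1` instead of `r + 1`. -/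
lemma total_ge (hΛ : ∀ i, (Λ i).card = r + 2) (n : ℕ) :
    (r + 2) * (r + 1) ^ (n + 1) + jumps Λ (n + 1) * (r + 1) ^ n ≤
      ∑ c ∈ Λ 0, ∑ d ∈ Λ (n + 1), W Λ c (n + 1) d := by
  have step : ∀ n, (r + 1) * (∑ d ∈ Λ n, ∑ c ∈ Λ 0, W Λ c n d) +
      (if Λ n = Λ (n + 1) then 0 else 1) * (r + 1) ^ n ≤
      ∑ d ∈ Λ (n + 1), ∑ c ∈ Λ 0, W Λ c (n + 1) d := by
    intro n
    have h1 := sum_sum_erase_add (Λ n) (Λ (n + 1)) (fun d => ∑ c ∈ Λ 0, W Λ c n d)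
    have h0 : ∑ d ∈ Λ (n + 1), ∑ c ∈ Λ 0, W Λ c (n + 1) d =
        ∑ d ∈ Λ (n + 1), ∑ e ∈ (Λ n).erase d, ∑ c ∈ Λ 0, W Λ c n e := by
      refine sum_congr rfl fun d _ => ?_
      simp only [W]
      rw [sum_comm]
    rw [hΛ] at h1
    rw [h0]
    split_ifs with h
    · have h2 : ∑ d ∈ Λ (n + 1) ∩ Λ n, ∑ c ∈ Λ 0, W Λ c n d ≤ ∑ d ∈ Λ n, ∑ c ∈ Λ 0, W Λ c n d :=
        sum_le_sum_of_subset inter_subset_right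
      linarith
    · obtain ⟨e, he, heS⟩ : ∃ e ∈ Λ n, e ∉ Λ (n + 1) := by
        by_contra! hcon
        exact h (eq_of_subset_of_card_le hcon (by rw [hΛ, hΛ]))
      have h2 := sum_inter_add_le (fun d => ∑ c ∈ Λ 0, W Λ c n d) he heS
      have h3 := pow_le_sum_start hΛ n e he
      linarith
  rw [sum_comm]
  induction n with
  | zero =>
    have h := step 0
    have h0 : ∑ d ∈ Λ 0, ∑ c ∈ Λ 0, W Λ c 0 d = r + 2 := by
      simp [W, hΛ]
    rw [h0] at h
    simp only [jumps, zero_add, sum_range_one] at h ⊢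
    linarith
  | succ n ih =>
    have h := step (n + 1)
    rw [jumps, sum_range_succ, ← jumps]
    have h2 := Nat.mul_le_mul_left (r + 1) ih
    refine le_trans ?_ h
    generalize (if Λ (n + 1) = Λ (n + 1 + 1) then 0 else 1 : ℕ) = δ at *
    calc _ = (r + 1) * ((r + 2) * (r + 1) ^ (n + 1) + jumps Λ (n + 1) * (r + 1) ^ n)
          + δ * (r + 1) ^ (n + 1) := by ring
      _ ≤ _ := by linarith

lemma eq_of_jumps_eq_zero {n : ℕ} (h : jumps Λ n = 0) : ∀ j ≤ n, Λ j = Λ 0 := by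
  intro j hj
  induction j with
  | zero => rfl
  | succ j ih =>
    rw [jumps, sum_eq_zero_iff] at h
    have := h j (mem_range.2 hj)
    rw [← ih (by omega)]
    by_contra hne
    simp [Ne.symm hne] at this

lemma ne_of_jumps_eq_one {n : ℕ} (h : jumps Λ n = 1) : Λ n ≠ Λ 0 := by
  induction n with
  | zero => simp [jumps] at h
  | succ n ih =>
    rw [jumps, sum_range_succ, ← jumps] at h
    split_ifs at h with hn
    · rw [← hn]; exact ih h
    · rw [← eq_of_jumps_eq_zero (by omega : jumps Λ n = 0) n le_rfl]
      exact Ne.symm hn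

/-- With equal lists, the counts for equal and for distinct end colors differ by one at even lengths. -/
lemma W_const {n : ℕ} (hΛ : ∀ i, (Λ i).card = r + 2) (h : ∀ j ≤ n, Λ j = Λ 0) {c : ℕ} (hc : c ∈ Λ 0)
    (k : ℕ) (hk : 2 * k ≤ n) (d : ℕ) (hd : d ∈ Λ 0) :
    W Λ c (2 * k) d = B r k + if d = c then 1 else 0 := by
  have hT : ∀ j ≤ n, ∑ d ∈ Λ 0, W Λ c j d = (r + 1) ^ j := by
    intro j hj
    induction j with
    | zero => simp [W, hc]
    | succ j ih =>
      have h1 := sum_sum_erase_add (Λ 0) (Λ 0) (W Λ c j)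
      rw [hΛ, inter_self, ih (by omega)] at h1
      simp only [W, h j (by omega)]
      rw [pow_succ]
      linarith
  have hs : ∀ j < n, ∀ d ∈ Λ 0, W Λ c (j + 1) d + W Λ c j d = (r + 1) ^ j := by
    intro j hj d hd
    rw [W, h j hj.le, sum_erase_add _ _ hd]
    exact hT j hj.le
  induction k generalizing d with
  | zero => simp [W, B]
  | succ k ih =>
    have h1 := hs (2 * k) (by omega) d hd
    have h2 := hs (2 * k + 1) (by omega) d hd
    have h3 := ih (by omega) d hd
    rw [pow_succ] at h2
    rw [show 2 * (k + 1) = 2 * k + 1 + 1 by ring, B]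
    nlinarith

end

/-! ### The four-cycle formed by the two short paths -/

lemma N_ge {X : Finset ℕ} {r : ℕ} (hX : X.card = r + 2) (c d : ℕ) :
    r + (if c = d then 1 else 0) ≤ N X c d := by
  have h1 := pred_card_le_card_erase (s := X) (a := c)
  have h2 := pred_card_le_card_erase (s := X.erase c) (a := d)
  unfold N
  split_ifs with h
  · subst h
    rw [erase_idem]
    omega
  · omega

lemma N_self {X : Finset ℕ} {r : ℕ} (hX : X.card = r + 2) {c d : ℕ} (hc : c ∈ X) (hd : d ∈ X) :
    N X c d = r + (if c = d then 1 else 0) := by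
  unfold N
  split_ifs with h
  · subst h
    rw [erase_idem, card_erase_of_mem hc]
    omega
  · rw [card_erase_of_mem (mem_erase.2 ⟨Ne.symm h, hd⟩), card_erase_of_mem hc]
    omega

/-- The path bound applied to the path with lists `U`, `X`, `V`. -/
lemma sum_N_ge {U X V : Finset ℕ} {r : ℕ} (hU : U.card = r + 2) (hX : X.card = r + 2)
    (hV : V.card = r + 2) :
    (r + 2) * (r + 1) ^ 2 + (if U = V then 0 else 1) * (r + 1) ≤ ∑ c ∈ U, ∑ d ∈ V, N X c d := by
  let Λ : ℕ → Finset ℕ := fun i => if i = 0 then U else if i = 1 then X else V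
  have hΛ : ∀ i, (Λ i).card = r + 2 := by
    intro i
    simp only [Λ]
    split_ifs <;> assumption
  have h := total_ge hΛ 1
  have hW : ∀ c ∈ U, ∀ d, W Λ c 2 d = N X c d := by
    intro c hc d
    have h1 : ∀ e, W Λ c 1 e = if e = c then 0 else 1 := by
      intro e
      simp [W, Λ, hc, eq_comm]
    rw [N, erase_right_comm, card_eq_sum_ones, ← filter_ne', sum_filter]
    rw [show W Λ c 2 d = ∑ e ∈ X.erase d, W Λ c 1 e from rfl]
    refine sum_congr rfl fun e _ => ?_
    rw [h1]
    split_ifs <;> simp_all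
  have hj : (if U = V then 0 else 1) ≤ jumps Λ 2 := by
    split_ifs with hUV
    · exact Nat.zero_le _
    · by_contra hlt
      exact hUV (eq_of_jumps_eq_zero (by omega : jumps Λ 2 = 0) 2 le_rfl).symm
  have h2 : ∑ c ∈ Λ 0, ∑ d ∈ Λ (1 + 1), W Λ c (1 + 1) d = ∑ c ∈ U, ∑ d ∈ V, N X c d :=
    sum_congr rfl fun c hc => sum_congr rfl fun d _ => hW c hc d
  rw [h2] at h
  have h3 := Nat.mul_le_mul_right (r + 1) hj
  simp only [pow_one, Nat.reduceAdd] at h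
  linarith

/-- The number of colorings of the four-cycle with a palette of size `r + 2`. -/
def S₀ (r : ℕ) : ℕ := (r + 2) * (r + 1) ^ 2 + (r + 2) * (r + 1) * r ^ 2

/-- The list color function of the four-cycle equals its chromatic polynomial, with strict inequality
when two opposite vertices have different lists. -/
lemma cycle_ge {U V X Y : Finset ℕ} {r : ℕ} (hr : 1 ≤ r) (hU : U.card = r + 2) (hV : V.card = r + 2)
    (hX : X.card = r + 2) (hY : Y.card = r + 2) :
    S₀ r + (if U = V then 0 else 1) ≤ ∑ c ∈ U, ∑ d ∈ V, N X c d * N Y c d := by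
  have hx := sum_N_ge hU hX hV
  have hy := sum_N_ge hU hY hV
  -- Pointwise, `(N X c d - r) * (N Y c d - r) ≥ 0`, and `≥ 1` when `c = d`.
  have key : ∑ c ∈ U, ∑ d ∈ V, (r * (N X c d + N Y c d) + if c = d then 1 else 0) ≤
      ∑ c ∈ U, ∑ d ∈ V, (N X c d * N Y c d + r ^ 2) := by
    refine sum_le_sum fun c _ => sum_le_sum fun d _ => ?_
    obtain ⟨a, ha⟩ := Nat.exists_eq_add_of_le (N_ge hX c d)
    obtain ⟨b, hb⟩ := Nat.exists_eq_add_of_le (N_ge hY c d)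
    rw [ha, hb]
    split_ifs <;> nlinarith [Nat.zero_le (a * b), Nat.zero_le a, Nat.zero_le b]
  simp only [sum_add_distrib, ← mul_sum, sum_const, hU, hV, smul_eq_mul] at key
  unfold S₀
  by_cases h : U = V
  · subst h
    have hd : ∑ c ∈ U, ∑ d ∈ U, (if c = d then 1 else 0) = r + 2 := by simp [hU]
    rw [hd] at key
    simp only [if_true] at hx hy ⊢
    nlinarith
  · simp only [h, if_false] at hx hy ⊢
    have h1 := Nat.mul_le_mul_left r (add_le_add hx hy)
    have h2 : r + 3 ≤ 2 * r * (r + 1) := by nlinarith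
    have h3 := Nat.zero_le (∑ c ∈ U, ∑ d ∈ V, if c = d then 1 else 0)
    linarith

/-! ### Bounds for the theta graph -/

/-- The chromatic polynomial of `Θ(2,2,2k)` at `r + 2`. -/
def P₀ (r k : ℕ) : ℕ := B r k * S₀ r + (r + 2) * (r + 1) ^ 2

/-- The number of list colorings of `Θ(2,2,n)`, organized by the colors of its two ends. -/
def P (Λ : ℕ → Finset ℕ) (X Y : Finset ℕ) (n : ℕ) : ℕ :=
  ∑ c ∈ Λ 0, ∑ d ∈ Λ n, N X c d * N Y c d * W Λ c n d

section

variable {Λ : ℕ → Finset ℕ} {r : ℕ}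

lemma P_const (hΛ : ∀ i, (Λ i).card = r + 2) {k : ℕ} {X Y : Finset ℕ} (h : ∀ j ≤ 2 * k, Λ j = Λ 0) :
    P Λ X Y (2 * k) = B r k * (∑ c ∈ Λ 0, ∑ d ∈ Λ 0, N X c d * N Y c d) +
      ∑ c ∈ Λ 0, N X c c * N Y c c := by
  unfold P
  rw [h _ le_rfl, mul_sum, ← sum_add_distrib]
  refine sum_congr rfl fun c hc => ?_
  have : ∀ d ∈ Λ 0, N X c d * N Y c d * W Λ c (2 * k) d =
      B r k * (N X c d * N Y c d) + if d = c then N X c d * N Y c d else 0 := by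
    intro d hd
    rw [W_const hΛ h hc k le_rfl d hd]
    split_ifs <;> ring
  rw [sum_congr rfl this, sum_add_distrib, mul_sum, sum_ite_eq', if_pos hc]

/-- If all lists on the long path are equal, the bound for the four-cycle suffices. Otherwise the long path
has surplus colorings: at least two changes of list if its end lists agree, and at least one if they
differ, in which case the four-cycle has a surplus as well. -/
lemma P_ge (hr : 1 ≤ r) (hΛ : ∀ i, (Λ i).card = r + 2) {k : ℕ} (hk : 2 ≤ k) {X Y : Finset ℕ}
    (hX : X.card = r + 2) (hY : Y.card = r + 2) : P₀ r k ≤ P Λ X Y (2 * k) := by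
  have hS := cycle_ge hr (hΛ 0) (hΛ (2 * k)) hX hY
  by_cases h0 : jumps Λ (2 * k) = 0
  · have h := eq_of_jumps_eq_zero h0
    rw [P_const hΛ h]
    simp only [h _ le_rfl, if_true, add_zero] at hS
    have h2 : ∑ c ∈ Λ 0, (r + 1) ^ 2 ≤ ∑ c ∈ Λ 0, N X c c * N Y c c := by
      refine sum_le_sum fun c _ => ?_
      have hx := N_ge hX c c
      have hy := N_ge hY c c
      simp only [if_true] at hx hy
      rw [sq]
      exact Nat.mul_le_mul hx hy
    rw [sum_const, hΛ, smul_eq_mul] at h2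
    exact add_le_add (Nat.mul_le_mul_left _ hS) h2
  · obtain ⟨l, rfl⟩ := Nat.exists_eq_add_of_le' hk
    have hT := total_ge hΛ (2 * l + 3)
    rw [show 2 * l + 3 + 1 = 2 * (l + 2) by ring, ← B_spec] at hT
    have hB : 1 ≤ B r (l + 2) := by
      have : 0 < r * (r + 1) ^ (2 * (l + 1)) := by positivity
      rw [B]
      omega
    have hq : (r + 1) ^ 3 ≤ (r + 1) ^ (2 * l + 3) := Nat.pow_le_pow_right (by omega) (by omega)
    -- Pointwise, `(N X c d * N Y c d - r ^ 2) * (W Λ c (2k) d - B r k) ≥ 0`.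
    have key : ∑ c ∈ Λ 0, ∑ d ∈ Λ (2 * (l + 2)),
        (B r (l + 2) * (N X c d * N Y c d) + r ^ 2 * W Λ c (2 * (l + 2)) d) ≤
        ∑ c ∈ Λ 0, ∑ d ∈ Λ (2 * (l + 2)),
        (N X c d * N Y c d * W Λ c (2 * (l + 2)) d + r ^ 2 * B r (l + 2)) := by
      refine sum_le_sum fun c hc => sum_le_sum fun d _ => ?_
      have h1 : r ^ 2 ≤ N X c d * N Y c d := by
        rw [sq]
        exact Nat.mul_le_mul ((Nat.le_add_right _ _).trans (N_ge hX c d))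
          ((Nat.le_add_right _ _).trans (N_ge hY c d))
      obtain ⟨a, ha⟩ := Nat.exists_eq_add_of_le h1
      obtain ⟨b, hb⟩ := Nat.exists_eq_add_of_le (B_le_W hΛ hc (l + 2) d)
      rw [ha, hb]
      nlinarith [Nat.zero_le (a * b)]
    simp only [sum_add_distrib, ← mul_sum, sum_const, hΛ, smul_eq_mul] at key
    unfold P₀ P
    generalize ∑ c ∈ Λ 0, ∑ d ∈ Λ (2 * (l + 2)), N X c d * N Y c d = S at *
    generalize ∑ c ∈ Λ 0, ∑ d ∈ Λ (2 * (l + 2)), W Λ c (2 * (l + 2)) d = T at *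
    generalize B r (l + 2) = b at *
    generalize (r + 1) ^ (2 * l + 3) = q at *
    have hT2 := Nat.mul_le_mul_left (r ^ 2) hT
    have hS2 := Nat.mul_le_mul_left b hS
    have hrr : r ≤ r ^ 2 := Nat.le_self_pow (by norm_num) r
    by_cases hUV : Λ 0 = Λ (2 * (l + 2))
    · have h1 : jumps Λ (2 * (l + 2)) ≠ 1 := fun h => ne_of_jumps_eq_one h hUV.symm
      have h2 : r ^ 2 * (2 * (r + 1) ^ 3) ≤ r ^ 2 * (jumps Λ (2 * (l + 2)) * q) :=
        Nat.mul_le_mul_left _ (Nat.mul_le_mul (by omega) hq)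
      have h3 : (r + 2) * (2 * r + 1) ≤ r ^ 2 * (2 * (r + 1) ^ 3) := by
        obtain ⟨s, rfl⟩ := Nat.exists_eq_add_of_le' hr
        ring_nf
        nlinarith [Nat.zero_le (s ^ 2), Nat.zero_le (s ^ 3), Nat.zero_le (s ^ 4), Nat.zero_le (s ^ 5)]
      simp only [hUV, if_true, add_zero] at hS2
      nlinarith
    · have h2 : r ^ 2 * (1 * (r + 1) ^ 3) ≤ r ^ 2 * (jumps Λ (2 * (l + 2)) * q) :=
        Nat.mul_le_mul_left _ (Nat.mul_le_mul (by omega) hq)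
      have h3 : (r + 2) * (2 * r + 1) ≤ r ^ 2 * (1 * (r + 1) ^ 3) + 1 := by
        obtain ⟨s, rfl⟩ := Nat.exists_eq_add_of_le' hr
        ring_nf
        nlinarith [Nat.zero_le (s ^ 2), Nat.zero_le (s ^ 3), Nat.zero_le (s ^ 4), Nat.zero_le (s ^ 5)]
      simp only [hUV, if_false] at hS2
      nlinarith

lemma P_palette {A : Finset ℕ} (hA : A.card = r + 2) (k : ℕ) : P (fun _ => A) A A (2 * k) = P₀ r k := by
  rw [P_const (r := r) (fun _ => hA) (fun _ _ => rfl), P₀]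
  have h1 : ∑ c ∈ A, N A c c * N A c c = (r + 2) * (r + 1) ^ 2 := by
    rw [sum_congr rfl fun c hc => by rw [N_self hA hc hc, if_pos rfl], sum_const, hA, smul_eq_mul, sq]
  have h2 : ∑ c ∈ A, ∑ d ∈ A, N A c d * N A c d = S₀ r := by
    have : ∀ c ∈ A, ∑ d ∈ A, N A c d * N A c d = (r + 2) * r ^ 2 + (2 * r + 1) := by
      intro c hc
      have : ∀ d ∈ A, N A c d * N A c d = r ^ 2 + if c = d then 2 * r + 1 else 0 := by
        intro d hd
        rw [N_self hA hc hd]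
        split_ifs <;> ring
      rw [sum_congr rfl this, sum_add_distrib, sum_const, sum_ite_eq, if_pos hc, hA, smul_eq_mul]
    rw [sum_congr rfl this, sum_const, hA, smul_eq_mul, S₀]
    ring
  rw [h1, h2]

/-! ### Colorings of the theta graph as colorings of its long path -/

/-- The proper list colorings of a path with lists `Λ 0, …, Λ n`. -/
def paths (Λ : ℕ → Finset ℕ) (n : ℕ) : Finset (Fin (n + 1) → ℕ) :=
  (Fintype.piFinset fun i : Fin (n + 1) => Λ i).filter
    fun p => ∀ i : Fin n, p i.castSucc ≠ p i.succ

lemma mem_paths {n : ℕ} {p : Fin (n + 1) → ℕ} : p ∈ paths Λ n ↔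
    (∀ i : Fin (n + 1), p i ∈ Λ i) ∧ ∀ i : Fin n, p i.castSucc ≠ p i.succ := by
  simp [paths]

/-- A path coloring is a coloring of the path without its last vertex together with a color for that
vertex. -/
lemma sum_paths_succ (n : ℕ) (F : ℕ → ℕ → ℕ) :
    ∑ p ∈ paths Λ (n + 1), F (p 0) (p (Fin.last _)) =
      ∑ q ∈ paths Λ n, ∑ d ∈ (Λ (n + 1)).erase (q (Fin.last _)), F (q 0) d := by
  rw [← sum_sigma (paths Λ n) (fun q => (Λ (n + 1)).erase (q (Fin.last _))) (fun x => F (x.1 0) x.2)]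
  refine sum_bij' (fun p _ => ⟨Fin.init p, p (Fin.last _)⟩)
    (fun x _ => (Fin.snoc x.1 x.2 : Fin (n + 2) → ℕ)) ?_ ?_ ?_ ?_ ?_
  · intro p hp
    rw [mem_paths] at hp
    rw [mem_sigma, mem_erase, mem_paths]
    refine ⟨⟨fun i => by simpa [Fin.init] using hp.1 i.castSucc, fun i => ?_⟩, ?_, ?_⟩
    · simpa [Fin.init] using hp.2 i.castSucc
    · simpa [Fin.init] using (hp.2 (Fin.last n)).symm
    · simpa using hp.1 (Fin.last _)
  · rintro ⟨q, d⟩ hx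
    rw [mem_sigma, mem_erase, mem_paths] at hx
    obtain ⟨⟨h1, h2⟩, h3, h4⟩ := hx
    rw [mem_paths]
    constructor
    · intro i
      refine Fin.lastCases ?_ (fun i => ?_) i
      · simpa using h4
      · simpa using h1 i
    · intro i
      refine Fin.lastCases ?_ (fun i => ?_) i
      · simpa using h3.symm
      · rw [← Fin.castSucc_succ]
        simpa only [Fin.snoc_castSucc] using h2 i
  · intro p _
    exact Fin.snoc_init_self p
  · rintro ⟨q, d⟩ _
    simp
  · intro p _
    rfl

lemma sum_paths (n : ℕ) (F : ℕ → ℕ → ℕ) :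
    ∑ p ∈ paths Λ n, F (p 0) (p (Fin.last _)) = ∑ c ∈ Λ 0, ∑ d ∈ Λ n, F c d * W Λ c n d := by
  induction n generalizing F with
  | zero =>
    have : ∀ c ∈ Λ 0, ∑ d ∈ Λ 0, F c d * W Λ c 0 d = F c c := by
      intro c hc
      simp [W, hc]
    rw [sum_congr rfl this]
    refine sum_bij' (fun p _ => p 0) (fun c _ => fun _ => c) ?_ ?_ ?_ ?_ ?_
    · intro p hp
      exact (mem_paths.1 hp).1 0
    · intro c hc
      rw [mem_paths]
      refine ⟨fun i => ?_, fun i => i.elim0⟩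
      obtain rfl := Fin.fin_one_eq_zero i
      exact hc
    · intro p _
      funext i
      obtain rfl := Fin.fin_one_eq_zero i
      rfl
    · intro c _
      rfl
    · intro p _
      rfl
  | succ n ih =>
    rw [sum_paths_succ, ih (fun c e => ∑ d ∈ (Λ (n + 1)).erase e, F c d)]
    refine sum_congr rfl fun c _ => ?_
    simp only [W, sum_mul, mul_sum]
    refine sum_comm' fun e d => ?_
    simp only [mem_erase]
    tauto

end

/-- The vertex at distance `i` from `u = 0` on the path of length `2k` of `thetaGraph k`; its end `v` is
the vertex `1`. -/
def vtx (k i : ℕ) : Fin (2 * k + 3) :=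
  if i = 0 then 0 else if h : i < 2 * k then ⟨i + 3, by omega⟩ else 1

section

variable {k : ℕ}

lemma val_vtx (k i : ℕ) : (i = 0 ∧ (vtx k i).val = 0) ∨
    (0 < i ∧ i < 2 * k ∧ (vtx k i).val = i + 3) ∨ (0 < i ∧ 2 * k ≤ i ∧ (vtx k i).val = 1) := by
  unfold vtx
  split_ifs with h h'
  · exact Or.inl ⟨h, rfl⟩
  · exact Or.inr (Or.inl ⟨by omega, h', rfl⟩)
  · exact Or.inr (Or.inr ⟨by omega, by omega, rfl⟩)

lemma vtx_zero : vtx k 0 = 0 := rfl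

lemma vtx_last (hk : 1 ≤ k) : vtx k (2 * k) = 1 := by
  rw [vtx, if_neg (by omega), dif_neg (by omega)]

lemma val_three (hk : 1 ≤ k) : (3 : Fin (2 * k + 3)).val = 3 :=
  Nat.mod_eq_of_lt (show 3 < 2 * k + 3 by omega)

lemma cases_vtx (hk : 1 ≤ k) (a : Fin (2 * k + 3)) :
    a = 2 ∨ a = 3 ∨ ∃ i : Fin (2 * k + 1), a = vtx k i := by
  by_cases h0 : a.val = 0
  · exact Or.inr (Or.inr ⟨0, Fin.ext h0⟩)
  by_cases h1 : a.val = 1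
  · refine Or.inr (Or.inr ⟨Fin.last _, Fin.ext ?_⟩)
    rw [Fin.val_last, vtx_last hk]
    exact h1
  by_cases h2 : a.val = 2
  · exact Or.inl (Fin.ext h2)
  by_cases h3 : a.val = 3
  · exact Or.inr (Or.inl (Fin.ext (h3.trans (val_three hk).symm)))
  have ha := a.isLt
  refine Or.inr (Or.inr ⟨⟨a.val - 3, by omega⟩, Fin.ext ?_⟩)
  have := val_vtx k (a.val - 3)
  simp only
  omega

lemma isProper_iff (hk : 1 ≤ k) (L : Fin (2 * k + 3) → Finset ℕ) (f : Fin (2 * k + 3) → ℕ) :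
    IsProperListColoring (thetaGraph k) L f ↔
      (fun i : Fin (2 * k + 1) => f (vtx k i)) ∈ paths (fun i => L (vtx k i)) (2 * k) ∧
      f 2 ∈ ((L 2).erase (f 0)).erase (f 1) ∧
      f 3 ∈ ((L 3).erase (f 0)).erase (f 1) := by
  have e0 : (0 : Fin (2 * k + 3)).val = 0 := rfl
  have e1 : (1 : Fin (2 * k + 3)).val = 1 := rfl
  have e2 : (2 : Fin (2 * k + 3)).val = 2 := rfl
  have e3 := val_three hk
  simp only [IsProperListColoring, thetaGraph, SimpleGraph.fromRel_adj, mem_paths, mem_erase]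
  constructor
  · rintro ⟨hL, hA⟩
    refine ⟨⟨fun i => hL _, fun i => hA ⟨?_, ?_⟩⟩, ⟨hA ⟨?_, ?_⟩, hA ⟨?_, ?_⟩, hL _⟩,
      hA ⟨?_, ?_⟩, hA ⟨?_, ?_⟩, hL _⟩
    · have := i.isLt
      have := val_vtx k i
      have := val_vtx k (i + 1)
      simp only [ne_eq, Fin.ext_iff, Fin.val_castSucc, Fin.val_succ]
      omega
    · have := i.isLt
      have := val_vtx k i
      have := val_vtx k (i + 1)
      refine Or.inl (Or.inr (Or.inr (Or.inr (Or.inr ?_))))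
      simp only [Fin.val_castSucc, Fin.val_succ]
      omega
    all_goals simp only [ne_eq, Fin.ext_iff, e0, e1, e2, e3]; simp
  · rintro ⟨⟨hL, hA⟩, ⟨h21, h20, h2⟩, h31, h30, h3⟩
    refine ⟨fun a => ?_, ?_⟩
    · obtain rfl | rfl | ⟨i, rfl⟩ := cases_vtx hk a
      exacts [h2, h3, hL i]
    · suffices h : ∀ a b : Fin (2 * k + 3), ((a.val = 0 ∧ b.val = 2) ∨ (a.val = 2 ∧ b.val = 1) ∨
          (a.val = 0 ∧ b.val = 3) ∨ (a.val = 3 ∧ b.val = 1) ∨ (a.val = 0 ∧ b.val = 4) ∨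
          (4 ≤ a.val ∧ b.val = a.val + 1 ∧ a.val + 1 ≤ 2*k+2) ∨
          (a.val = 2*k+2 ∧ b.val = 1)) → f a ≠ f b by
        rintro a b ⟨-, hab | hab⟩
        exacts [h a b hab, (h b a hab).symm]
      have hstep : ∀ a b : Fin (2 * k + 3), ∀ i < 2 * k, a = vtx k i → b = vtx k (i + 1) →
          f a ≠ f b := by
        rintro _ _ i hi rfl rfl
        exact hA ⟨i, hi⟩
      rintro a b (⟨ha, hb⟩ | ⟨ha, hb⟩ | ⟨ha, hb⟩ | ⟨ha, hb⟩ | ⟨ha, hb⟩ | ⟨ha, hb, hb2⟩ | ⟨ha, hb⟩)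
      · rw [Fin.ext (ha.trans e0.symm), Fin.ext (hb.trans e2.symm)]
        exact h20.symm
      · rw [Fin.ext (ha.trans e2.symm), Fin.ext (hb.trans e1.symm)]
        exact h21
      · rw [Fin.ext (ha.trans e0.symm), Fin.ext (hb.trans e3.symm)]
        exact h30.symm
      · rw [Fin.ext (ha.trans e3.symm), Fin.ext (hb.trans e1.symm)]
        exact h31
      · have := b.isLt
        refine hstep a b 0 (by omega) (Fin.ext ha) (Fin.ext ?_)
        have := val_vtx k (0 + 1)
        omega
      · have := val_vtx k (a.val - 3)
        have := val_vtx k (a.val - 3 + 1)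
        exact hstep a b (a.val - 3) (by omega) (Fin.ext (by omega)) (Fin.ext (by omega))
      · have := val_vtx k (2 * k - 1)
        have := val_vtx k (2 * k - 1 + 1)
        exact hstep a b (2 * k - 1) (by omega) (Fin.ext (by omega)) (Fin.ext (by omega))

open Classical in
/-- A coloring of the theta graph is a coloring of its long path together with independent choices for the
two remaining vertices. -/
lemma numListColorings_eq (hk : 1 ≤ k) (L : Fin (2 * k + 3) → Finset ℕ) :
    numListColorings (thetaGraph k) L = P (fun i => L (vtx k i)) (L 2) (L 3) (2 * k) := by
  have e3 := val_three hk
  rw [P, ← sum_paths (Λ := fun i => L (vtx k i)) (2 * k) (fun c d => N (L 2) c d * N (L 3) c d), numListColorings,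
    Nat.subtype_card ((Fintype.piFinset L).filter fun f => IsProperListColoring (thetaGraph k) L f)
      (fun f => by simpa using fun h => h.1)]
  simp only [N]
  simp only [← card_product]
  rw [← card_sigma]
  refine card_bij (fun f _ => ⟨fun i => f (vtx k i), (f 2, f 3)⟩) ?_ ?_ ?_
  · intro f hf
    have h := (isProper_iff hk L f).1 (mem_filter.1 hf).2
    rw [mem_sigma, mem_product]
    simp only [Fin.val_last, vtx_last hk, Fin.val_zero, vtx_zero]
    exact h
  · intro f _ g _ h
    simp only [Sigma.mk.injEq, heq_eq_eq, Prod.mk.injEq] at h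
    obtain ⟨h1, h2, h3⟩ := h
    funext a
    obtain rfl | rfl | ⟨i, rfl⟩ := cases_vtx hk a
    exacts [h2, h3, congrFun h1 i]
  · rintro ⟨p, x, y⟩ hp
    let f : Fin (2 * k + 3) → ℕ := fun a =>
      if a = 2 then x else if a = 3 then y else if a = 0 then p 0 else
        if a = 1 then p (Fin.last _) else p (Fin.ofNat _ (a.val - 3))
    have f2 : f 2 = x := if_pos rfl
    have f3 : f 3 = y := by
      simp only [f, if_true]
      rw [if_neg]
      rw [Fin.ext_iff, e3]
      exact (by decide : (3 : ℕ) ≠ 2)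
    have fp : ∀ i : Fin (2 * k + 1), f (vtx k i) = p i := by
      intro i
      have h := val_vtx k i
      have hi := i.isLt
      have n2 : vtx k i ≠ 2 := fun hh => by
        have : (vtx k i).val = 2 := by rw [hh]; rfl
        omega
      have n3 : vtx k i ≠ 3 := fun hh => by
        have : (vtx k i).val = 3 := by rw [hh, e3]
        omega
      simp only [f, if_neg n2, if_neg n3]
      obtain ⟨h1, h2⟩ | ⟨h1, h1', h2⟩ | ⟨h1, h1', h2⟩ := h
      · rw [if_pos (Fin.ext h2)]
        exact congrArg p (Fin.ext h1.symm)
      · rw [if_neg fun hh => ?_, if_neg fun hh => ?_]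
        · refine congrArg p (Fin.ext ?_)
          rw [h2]
          exact Nat.mod_eq_of_lt hi
        · have : (vtx k i).val = 1 := by rw [hh]; rfl
          omega
        · have : (vtx k i).val = 0 := by rw [hh]; rfl
          omega
      · rw [if_neg fun hh => ?_, if_pos (Fin.ext h2)]
        · refine congrArg p (Fin.ext ?_)
          rw [Fin.val_last]
          omega
        · have : (vtx k i).val = 0 := by rw [hh]; rfl
          omega
    have fp' : (fun i : Fin (2 * k + 1) => f (vtx k i)) = p := funext fp
    have f0 : f 0 = p 0 := fp 0
    have f1 : f 1 = p (Fin.last _) := by rw [← fp, Fin.val_last, vtx_last hk]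
    have hf : IsProperListColoring (thetaGraph k) L f := by
      rw [isProper_iff hk, fp', f0, f1, f2, f3]
      rw [mem_sigma, mem_product] at hp
      exact hp
    refine ⟨f, mem_filter.2 ⟨Fintype.mem_piFinset.2 hf.1, hf⟩, ?_⟩
    rw [fp', f2, f3]

end

end ThetaList

open ThetaList in
/-- Let `G = Θ(2,2,2k)` with `k ≥ 2`.  Then `P_ℓ(G,m) = P(G,m)` for every integer `m ≥ 3`. -/
theorem theta_listColorFn_eq_chromPoly (k : ℕ) (hk : 2 ≤ k) (m : ℕ) (hm : 3 ≤ m) :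
    listColorFn (thetaGraph k) m = chromPoly (thetaGraph k) m := by
  obtain ⟨r, rfl⟩ := Nat.exists_eq_add_of_le' (show 2 ≤ m by omega)
  have hA : (Finset.Icc 1 (r + 2)).card = r + 2 := by simp
  have hc : chromPoly (thetaGraph k) (r + 2) = P₀ r k := by
    rw [chromPoly, numListColorings_eq (by omega), P_palette hA]
  apply le_antisymm
  · exact Nat.sInf_le ⟨_, fun _ => hA, rfl⟩
  · refine le_csInf ⟨_, _, fun _ => hA, rfl⟩ ?_
    rintro n ⟨L, hL, rfl⟩
    rw [hc, numListColorings_eq (by omega)]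
    exact P_ge (by omega) (fun i => hL _) hk (hL _) (hL _)
end
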